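/- For a Doi-Hopf datum (H,A,C), the Koppinen smash product #(C,A) — the k-module Hom_k(C,A) equipped with the multiplication (f•g)(c) = Σ f(c_(1))_{<0>} · g(c_(2) · f(c_(1))_{<-1>}) — is an associative unital k-algebra with unit the map c ↦ ε(c)·1_A. -/

import Mathlib

/-!
Write `twist g (p ⊗ b) d = b * g (d · p)`, so that
`(f • g)(c) = Σ twist g (ρ (f c_(1))) c_(2)`. Associativity rests on the identity
`twist (g • h) (ρ a) d = Σ twist h (ρ (twist g (ρ a) d_(1))) d_(2)` (`twist_koppinenMul`): on the
left, `Δ(d · a_{<-1>})` is expanded by the module coalgebra axiom; on the right, `ρ` of a product is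
expanded by the comodule algebra axiom and the two successive actions are combined; the results
are the values of one linear map on `(Δ ⊗ id) ρ(a)` and `(id ⊗ ρ) ρ(a)`, which agree by
coassociativity of `ρ`. Given this identity, `(f • g) • h` and `f • (g • h)` are one trilinear
expression evaluated on the two forms of the iterated coproduct of `C`. The unit laws come from
the counit axioms, and bilinearity is immediate.
-/

open TensorProduct

noncomputable section

/-- A Doi-Hopf datum `(H, A, C)`: `H` is a `k`-bialgebra, `A` is a left `H`-comodule
algebra (with coaction `ρ`), and `C` is a right `H`-module coalgebra (with action `act`). -/
structure DoiHopfDatum (k H A C : Type*) [CommRing k] [Ring H] [Bialgebra k H]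
    [Ring A] [Algebra k A] [AddCommGroup C] [Module k C] [Coalgebra k C] where
  /-- the coaction `ρ_A : A → H ⊗ A`, `ρ a = Σ a_{<-1>} ⊗ a_{<0>}` -/
  ρ : A →ₗ[k] H ⊗[k] A
  ρ_coassoc : ∀ a : A,
    (TensorProduct.assoc k H H A)
        ((TensorProduct.map (Coalgebra.comul (R := k)) LinearMap.id) (ρ a))
      = (TensorProduct.map LinearMap.id ρ) (ρ a)
  ρ_counit : ∀ a : A,
    (TensorProduct.lid k A)
        ((TensorProduct.map (Coalgebra.counit (R := k)) LinearMap.id) (ρ a)) = a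
  ρ_mul : ∀ a b : A, ρ (a * b) = ρ a * ρ b
  ρ_one : ρ 1 = 1
  /-- the right `H`-action on `C`, written `act c h = c · h` -/
  act : C →ₗ[k] H →ₗ[k] C
  act_one : ∀ c : C, act c 1 = c
  act_mul : ∀ (c : C) (g h : H), act (act c g) h = act c (g * h)
  comul_act : ∀ (c : C) (h : H),
    Coalgebra.comul (R := k) (act c h)
      = (TensorProduct.map (TensorProduct.lift act) (TensorProduct.lift act))
          ((TensorProduct.tensorTensorTensorComm k C C H H)
            (Coalgebra.comul (R := k) c ⊗ₜ[k] Coalgebra.comul (R := k) h))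
  counit_act : ∀ (c : C) (h : H),
    Coalgebra.counit (R := k) (act c h)
      = Coalgebra.counit (R := k) c * Coalgebra.counit (R := k) h

namespace DoiHopfDatum

variable {k H A C : Type*} [CommRing k] [Ring H] [Bialgebra k H]
    [Ring A] [Algebra k A] [AddCommGroup C] [Module k C] [Coalgebra k C]
variable (D : DoiHopfDatum k H A C)

/-- The action `C ⊗ H → C` as a linear map on the tensor product. -/
def actL : C ⊗[k] H →ₗ[k] C := TensorProduct.lift D.act

/-- The iterated coaction `a ↦ Σ (a_{<-2>} ⊗ a_{<-1>}) ⊗ a_{<0>}`. -/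
def ρ2 : A →ₗ[k] (H ⊗[k] H) ⊗[k] A :=
  (TensorProduct.assoc k H H A).symm.toLinearMap ∘ₗ
    (TensorProduct.map LinearMap.id D.ρ) ∘ₗ D.ρ

/-- The simultaneous action of `H ⊗ H` on `C ⊗ C`. -/
def act2 : (C ⊗[k] C) ⊗[k] (H ⊗[k] H) →ₗ[k] C ⊗[k] C :=
  (TensorProduct.map D.actL D.actL) ∘ₗ
    (TensorProduct.tensorTensorTensorComm k C C H H).toLinearMap

/-- The right `A`-action on `C ⊗ A`: `(c ⊗ b) · a = Σ c·a_{<-1>} ⊗ b·a_{<0>}`. -/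
def rActCA : (C ⊗[k] A) ⊗[k] A →ₗ[k] C ⊗[k] A :=
  (TensorProduct.map D.actL (LinearMap.mul' k A)) ∘ₗ
    (TensorProduct.tensorTensorTensorComm k C A H A).toLinearMap ∘ₗ
    (TensorProduct.map LinearMap.id D.ρ)

/-- The right-hand side of condition (a) of `V₃`:
`(c ⊗ d) ⊗ a ↦ Σ a_{<0>} * θ(c·a_{<-2>} ⊗ d·a_{<-1>})`. -/
def V3aRHS (θ : C ⊗[k] C →ₗ[k] A) : (C ⊗[k] C) ⊗[k] A →ₗ[k] A :=
  (LinearMap.mul' k A) ∘ₗ (TensorProduct.comm k A A).toLinearMap ∘ₗ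
    (TensorProduct.map θ LinearMap.id) ∘ₗ
    (TensorProduct.map D.act2 LinearMap.id) ∘ₗ
    (TensorProduct.assoc k (C ⊗[k] C) (H ⊗[k] H) A).symm.toLinearMap ∘ₗ
    (TensorProduct.map LinearMap.id D.ρ2)

/-- The left-hand side of condition (b) of `V₃`: `c ⊗ d ↦ Σ c_(1) ⊗ θ(c_(2) ⊗ d)`. -/
def V3bLHS (_D : DoiHopfDatum k H A C) (θ : C ⊗[k] C →ₗ[k] A) : C ⊗[k] C →ₗ[k] C ⊗[k] A :=
  (TensorProduct.map LinearMap.id θ) ∘ₗ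
    (TensorProduct.assoc k C C C).toLinearMap ∘ₗ
    (TensorProduct.map (Coalgebra.comul (R := k)) LinearMap.id)

/-- The right-hand side of condition (b) of `V₃`:
`c ⊗ d ↦ Σ d_(2)·θ(c ⊗ d_(1))_{<-1>} ⊗ θ(c ⊗ d_(1))_{<0>}`. -/
def V3bRHS (θ : C ⊗[k] C →ₗ[k] A) : C ⊗[k] C →ₗ[k] C ⊗[k] A :=
  (TensorProduct.map D.actL LinearMap.id) ∘ₗ
    (TensorProduct.assoc k C H A).symm.toLinearMap ∘ₗ
    (TensorProduct.comm k (H ⊗[k] A) C).toLinearMap ∘ₗ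
    (TensorProduct.map D.ρ LinearMap.id) ∘ₗ
    (TensorProduct.map θ LinearMap.id) ∘ₗ
    (TensorProduct.assoc k C C C).symm.toLinearMap ∘ₗ
    (TensorProduct.map LinearMap.id (Coalgebra.comul (R := k)))

/-- `θ : C ⊗ C → A` belongs to `V₃`. -/
def IsV3 (θ : C ⊗[k] C →ₗ[k] A) : Prop :=
  (∀ (c d : C) (a : A), θ (c ⊗ₜ[k] d) * a = D.V3aRHS θ ((c ⊗ₜ[k] d) ⊗ₜ[k] a)) ∧
    D.V3bLHS θ = D.V3bRHS θ

/-- `θ` is normalized: `Σ θ(c_(1) ⊗ c_(2)) = ε(c)1_A`. -/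
def IsNormalizedV3 (_D : DoiHopfDatum k H A C) (θ : C ⊗[k] C →ₗ[k] A) : Prop :=
  ∀ c : C, θ (Coalgebra.comul (R := k) c)
    = algebraMap k A (Coalgebra.counit (R := k) c)

/-- An `A`-integral `γ : C → Hom(C,A)` for the Doi-Hopf datum: its uncurried form
lies in `V₃`. -/
def IsAIntegral (γ : C →ₗ[k] (C →ₗ[k] A)) : Prop :=
  D.IsV3 (TensorProduct.lift γ)

/-- A total `A`-integral: a normalized `A`-integral. -/
def IsTotalAIntegral (γ : C →ₗ[k] (C →ₗ[k] A)) : Prop :=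
  D.IsAIntegral γ ∧ D.IsNormalizedV3 (TensorProduct.lift γ)

end DoiHopfDatum

/-- A right-left Doi-Hopf module over the Doi-Hopf datum `D`: a right `A`-module and
left `C`-comodule `M` satisfying `ρ_M(m·a) = Σ m_{<-1>}·a_{<-1>} ⊗ m_{<0>}·a_{<0>}`. -/
structure DHModule {k H A C : Type*} [CommRing k] [Ring H] [Bialgebra k H]
    [Ring A] [Algebra k A] [AddCommGroup C] [Module k C] [Coalgebra k C]
    (D : DoiHopfDatum k H A C) (M : Type*) [AddCommGroup M] [Module k M] where
  /-- the right `A`-action on `M` -/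
  sm : M →ₗ[k] A →ₗ[k] M
  sm_one : ∀ m : M, sm m 1 = m
  sm_mul : ∀ (m : M) (a b : A), sm (sm m a) b = sm m (a * b)
  /-- the left `C`-coaction `ρ_M : M → C ⊗ M` -/
  cρ : M →ₗ[k] C ⊗[k] M
  cρ_coassoc : ∀ m : M,
    (TensorProduct.assoc k C C M)
        ((TensorProduct.map (Coalgebra.comul (R := k)) LinearMap.id) (cρ m))
      = (TensorProduct.map LinearMap.id cρ) (cρ m)
  cρ_counit : ∀ m : M,
    (TensorProduct.lid k M)
        ((TensorProduct.map (Coalgebra.counit (R := k)) LinearMap.id) (cρ m)) = m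
  compat : ∀ (m : M) (a : A),
    cρ (sm m a)
      = (TensorProduct.map D.actL (TensorProduct.lift sm))
          ((TensorProduct.tensorTensorTensorComm k C M H A)
            (cρ m ⊗ₜ[k] D.ρ a))

namespace DoiHopfDatum

variable {k H A C : Type*} [CommRing k] [Ring H] [Bialgebra k H]
    [Ring A] [Algebra k A] [AddCommGroup C] [Module k C] [Coalgebra k C]
variable (D : DoiHopfDatum k H A C)

/-- The natural transformation attached to `θ : C ⊗ C → A`:
`ν_M (c ⊗ m) = Σ m_{<0>} · θ(c ⊗ m_{<-1>})`. -/
def nuMap (θ : C ⊗[k] C →ₗ[k] A) {M : Type*} [AddCommGroup M] [Module k M]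
    (DM : DHModule D M) : C ⊗[k] M →ₗ[k] M :=
  (TensorProduct.lift DM.sm) ∘ₗ (TensorProduct.comm k A M).toLinearMap ∘ₗ
    (TensorProduct.map θ LinearMap.id) ∘ₗ
    (TensorProduct.assoc k C C M).symm.toLinearMap ∘ₗ
    (TensorProduct.map LinearMap.id DM.cρ)

/-- The right `A`-action on `C ⊗ M`: `(c ⊗ m) · a = Σ c·a_{<-1>} ⊗ m·a_{<0>}`. -/
def actCM {M : Type*} [AddCommGroup M] [Module k M] (DM : DHModule D M) :
    (C ⊗[k] M) ⊗[k] A →ₗ[k] C ⊗[k] M :=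
  (TensorProduct.map D.actL (TensorProduct.lift DM.sm)) ∘ₗ
    (TensorProduct.tensorTensorTensorComm k C M H A).toLinearMap ∘ₗ
    (TensorProduct.map LinearMap.id D.ρ)

end DoiHopfDatum

namespace DoiHopfDatum

variable {k H A C : Type*} [CommRing k] [Ring H] [Bialgebra k H]
    [Ring A] [Algebra k A] [AddCommGroup C] [Module k C] [Coalgebra k C]
variable (D : DoiHopfDatum k H A C)

/-- The Koppinen smash product multiplication on `Hom(C,A)`:
`(f • g)(c) = Σ f(c_(1))_{<0>} * g(c_(2) · f(c_(1))_{<-1>})`. -/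
def koppinenMul (f g : C →ₗ[k] A) : C →ₗ[k] A :=
  (LinearMap.mul' k A) ∘ₗ
    (TensorProduct.map LinearMap.id (g ∘ₗ D.actL)) ∘ₗ
    (TensorProduct.map LinearMap.id (TensorProduct.comm k H C).toLinearMap) ∘ₗ
    (TensorProduct.assoc k A H C).toLinearMap ∘ₗ
    (TensorProduct.map (TensorProduct.comm k H A).toLinearMap LinearMap.id) ∘ₗ
    (TensorProduct.map D.ρ LinearMap.id) ∘ₗ
    (TensorProduct.map f LinearMap.id) ∘ₗ
    (Coalgebra.comul (R := k))

/-- The unit of the Koppinen smash product: `c ↦ ε(c) 1_A`. -/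
def koppinenOne (_D : DoiHopfDatum k H A C) : C →ₗ[k] A :=
  (Algebra.linearMap k A) ∘ₗ (Coalgebra.counit (R := k))

end DoiHopfDatum

namespace DoiHopfDatum

variable {k H A C : Type*} [CommRing k] [Ring H] [Bialgebra k H]
    [Ring A] [Algebra k A] [AddCommGroup C] [Module k C] [Coalgebra k C]
variable (D : DoiHopfDatum k H A C)

/-- The bilinear operation `(p ⊗ b, d) ↦ b * g (d · p)`. Applied to `ρ a` it gives
`Σ a_{<0>} * g (d · a_{<-1>})`. -/
def twist (g : C →ₗ[k] A) : H ⊗[k] A →ₗ[k] C →ₗ[k] A :=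
  TensorProduct.lift (LinearMap.mk₂ k
    (fun (p : H) (b : A) => LinearMap.mulLeft k b ∘ₗ g ∘ₗ D.act.flip p)
    (fun p q b => by ext d; simp [mul_add])
    (fun r p b => by ext d; simp)
    (fun p b c => by ext d; simp [add_mul])
    (fun r p b => by ext d; simp))

@[simp]
lemma twist_tmul (g : C →ₗ[k] A) (p : H) (b : A) (d : C) :
    D.twist g (p ⊗ₜ[k] b) d = b * g (D.act d p) := by
  simp [twist]

/-- The uncurried form of `(c, d) ↦ Σ f(c)_{<0>} * g (d · f(c)_{<-1>})`. -/
def pairing (f g : C →ₗ[k] A) : C ⊗[k] C →ₗ[k] A :=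
  TensorProduct.lift (D.twist g ∘ₗ D.ρ ∘ₗ f)

@[simp]
lemma pairing_tmul (f g : C →ₗ[k] A) (c d : C) :
    D.pairing f g (c ⊗ₜ[k] d) = D.twist g (D.ρ (f c)) d := by
  simp [pairing]

lemma koppinenMul_apply (f g : C →ₗ[k] A) (c : C) :
    D.koppinenMul f g c = D.pairing f g (Coalgebra.comul (R := k) c) := by
  simp only [koppinenMul, LinearMap.comp_apply]
  generalize (Coalgebra.comul (R := k) c) = t
  induction t with
  | zero => simp
  | add x y hx hy => simp only [map_add, hx, hy]
  | tmul c d =>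
    rw [pairing_tmul, TensorProduct.map_tmul, TensorProduct.map_tmul]
    generalize D.ρ (f c) = u
    induction u with
    | zero => simp
    | add x y hx hy => simp only [TensorProduct.add_tmul, map_add, hx, hy, LinearMap.add_apply]
    | tmul p b => simp [actL]

/-- Multiplying by `p ⊗ b` on the left acts by `p` on the argument first; this uses that `C` is a
right `H`-module. -/
lemma twist_mul (g : C →ₗ[k] A) (p : H) (b : A) (u : H ⊗[k] A) (d : C) :
    D.twist g ((p ⊗ₜ[k] b) * u) d = b * D.twist g u (D.act d p) := by
  induction u with
  | zero => simp
  | add x y hx hy => simp only [mul_add, map_add, hx, hy, LinearMap.add_apply]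
  | tmul q c => simp [D.act_mul, mul_assoc]

/-- The linear map `p ⊗ (q ⊗ b) ↦ b * Σ g(x·p)_{<0>} * h ((y·q) · g(x·p)_{<-1>})`. -/
def twist₂ (g h : C →ₗ[k] A) (x y : C) : H ⊗[k] (H ⊗[k] A) →ₗ[k] A :=
  LinearMap.mul' k A ∘ₗ (TensorProduct.comm k A A).toLinearMap ∘ₗ
    TensorProduct.map
      (D.pairing g h ∘ₗ TensorProduct.map (D.act x) (D.act y)) LinearMap.id ∘ₗ
    (TensorProduct.assoc k H H A).symm.toLinearMap

@[simp]
lemma twist₂_tmul (g h : C →ₗ[k] A) (x y : C) (p q : H) (b : A) :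
    D.twist₂ g h x y (p ⊗ₜ[k] (q ⊗ₜ[k] b)) =
      b * D.twist h (D.ρ (g (D.act x p))) (D.act y q) := by
  simp [twist₂]

/-- Twisting twice, via multiplicativity of `ρ`. -/
lemma twist_twist (g h : C →ₗ[k] A) (t : H ⊗[k] A) (x y : C) :
    D.twist h (D.ρ (D.twist g t x)) y =
      D.twist₂ g h x y (TensorProduct.map LinearMap.id D.ρ t) := by
  induction t with
  | zero => simp
  | add s t hs ht => simp only [map_add, hs, ht, LinearMap.add_apply]
  | tmul p b =>
    rw [twist_tmul, D.ρ_mul, TensorProduct.map_tmul]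
    generalize D.ρ b = u
    induction u with
    | zero => simp
    | add s t hs ht =>
      simp only [add_mul, TensorProduct.tmul_add, map_add, hs, ht, LinearMap.add_apply]
    | tmul q c => simp [twist_mul]

/-- Twisting by a product, via compatibility of the comultiplication of `C` with the action. -/
lemma twist_koppinenMul_tmul (g h : C →ₗ[k] A) (p : H) (b : A) (d : C)
    {ι : Type*} (R : Coalgebra.Repr k d ι) :
    D.twist (D.koppinenMul g h) (p ⊗ₜ[k] b) d =
      ∑ i ∈ R.index, D.twist₂ g h (R.left i) (R.right i)
        (TensorProduct.assoc k H H A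
          (TensorProduct.map (Coalgebra.comul (R := k)) LinearMap.id (p ⊗ₜ[k] b))) := by
  rw [twist_tmul, koppinenMul_apply, D.comul_act, TensorProduct.map_tmul]
  rw [← R.eq]
  simp only [TensorProduct.sum_tmul, map_sum, Finset.mul_sum]
  refine Finset.sum_congr rfl fun i _ => ?_
  generalize (Coalgebra.comul (R := k) p) = u
  induction u with
  | zero => simp
  | add s t hs ht =>
    simp only [TensorProduct.tmul_add, TensorProduct.add_tmul, map_add, mul_add, hs, ht]
  | tmul q r => simp

/-- The central identity:
`Σ a_{<0>} * (g • h)(d · a_{<-1>}) = Σ twist h (ρ (twist g (ρ a) d_(1))) d_(2)`. -/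
lemma twist_koppinenMul (g h : C →ₗ[k] A) (a : A) (d : C) :
    D.twist (D.koppinenMul g h) (D.ρ a) d =
      D.pairing (D.twist g (D.ρ a)) h (Coalgebra.comul (R := k) d) := by
  let R := Coalgebra.Repr.arbitrary k d
  have key : ∀ t : H ⊗[k] A, D.twist (D.koppinenMul g h) t d =
      ∑ i ∈ R.index, D.twist₂ g h (R.left i) (R.right i)
        (TensorProduct.assoc k H H A
          (TensorProduct.map (Coalgebra.comul (R := k)) LinearMap.id t)) := by
    intro t
    induction t with
    | zero => simp
    | add s t hs ht => simp only [map_add, LinearMap.add_apply, hs, ht, Finset.sum_add_distrib]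
    | tmul p b => exact D.twist_koppinenMul_tmul g h p b d R
  rw [key, D.ρ_coassoc]
  rw [← R.eq]
  simp only [map_sum, pairing_tmul, twist_twist]

lemma koppinenMul_assoc (f g h : C →ₗ[k] A) :
    D.koppinenMul (D.koppinenMul f g) h = D.koppinenMul f (D.koppinenMul g h) := by
  ext c
  rw [koppinenMul_apply, koppinenMul_apply]
  -- Both sides are the trilinear map `Ψ` evaluated on the two forms of the iterated coproduct.
  let Ψ : C ⊗[k] C ⊗[k] C →ₗ[k] A :=
    TensorProduct.lift (D.twist h ∘ₗ D.ρ ∘ₗ D.pairing f g)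
  have h₁ : ∀ t : C ⊗[k] C, D.pairing (D.koppinenMul f g) h t =
      Ψ (TensorProduct.map (Coalgebra.comul (R := k)) LinearMap.id t) := by
    intro t
    induction t with
    | zero => simp
    | add s t hs ht => simp only [map_add, hs, ht]
    | tmul c d => simp [Ψ, koppinenMul_apply]
  have h₂ : ∀ t : C ⊗[k] C, D.pairing f (D.koppinenMul g h) t =
      Ψ ((TensorProduct.assoc k C C C).symm
        (TensorProduct.map LinearMap.id (Coalgebra.comul (R := k)) t)) := by
    intro t
    induction t with
    | zero => simp
    | add s t hs ht => simp only [map_add, hs, ht]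
    | tmul c d =>
      rw [pairing_tmul, twist_koppinenMul, TensorProduct.map_tmul]
      generalize (Coalgebra.comul (R := k) d) = u
      induction u with
      | zero => simp
      | add s t hs ht => simp only [TensorProduct.tmul_add, map_add, hs, ht]
      | tmul x y => simp [Ψ]
  rw [h₁, h₂]
  congr 1
  exact (Coalgebra.coassoc_symm_apply (R := k) c).symm

lemma twist_koppinenOne (t : H ⊗[k] A) (d : C) :
    D.twist D.koppinenOne t d = Coalgebra.counit (R := k) d •
      TensorProduct.lid k A (TensorProduct.map (Coalgebra.counit (R := k)) LinearMap.id t) := by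
  induction t with
  | zero => simp
  | add s t hs ht => simp only [map_add, LinearMap.add_apply, hs, ht, smul_add]
  | tmul p b =>
    simp [koppinenOne, D.counit_act, Algebra.algebraMap_eq_smul_one, mul_smul]

lemma koppinenMul_one (f : C →ₗ[k] A) : D.koppinenMul f D.koppinenOne = f := by
  ext c
  rw [koppinenMul_apply]
  have key : ∀ t : C ⊗[k] C, D.pairing f D.koppinenOne t =
      f (TensorProduct.rid k C
        (TensorProduct.map LinearMap.id (Coalgebra.counit (R := k)) t)) := by
    intro t
    induction t with
    | zero => simp
    | add s t hs ht => simp only [map_add, hs, ht]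
    | tmul c d => simp [twist_koppinenOne, D.ρ_counit]
  have hc := Coalgebra.lTensor_counit_comul (R := k) c
  rw [LinearMap.lTensor] at hc
  rw [key, hc]
  simp

lemma one_koppinenMul (f : C →ₗ[k] A) : D.koppinenMul D.koppinenOne f = f := by
  ext c
  rw [koppinenMul_apply]
  have key : ∀ t : C ⊗[k] C, D.pairing D.koppinenOne f t =
      f (TensorProduct.lid k C
        (TensorProduct.map (Coalgebra.counit (R := k)) LinearMap.id t)) := by
    intro t
    induction t with
    | zero => simp
    | add s t hs ht => simp only [map_add, hs, ht]
    | tmul c d =>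
      simp [koppinenOne, Algebra.algebraMap_eq_smul_one, D.ρ_one,
        Algebra.TensorProduct.one_def, D.act_one]
  have hc := Coalgebra.rTensor_counit_comul (R := k) c
  rw [LinearMap.rTensor] at hc
  rw [key, hc]
  simp

end DoiHopfDatum

/-- for a Doi-Hopf datum `(H,A,C)`, the Koppinen smash product `#(C,A)`,
i.e. `Hom_k(C,A)` equipped with `(f • g)(c) = Σ f(c_(1))_{<0>} · g(c_(2)·f(c_(1))_{<-1>})`,
is an associative unital `k`-algebra with unit `c ↦ ε(c)·1_A`: the multiplication is
`k`-bilinear, associative, and has `c ↦ ε(c)1_A` as two-sided unit. -/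
theorem koppinen_assoc_unital_algebra
    {k H A C : Type*} [CommRing k] [Ring H] [Bialgebra k H]
    [Ring A] [Algebra k A] [AddCommGroup C] [Module k C] [Coalgebra k C]
    (D : DoiHopfDatum k H A C) :
    (∀ f g h : C →ₗ[k] A,
        D.koppinenMul (D.koppinenMul f g) h = D.koppinenMul f (D.koppinenMul g h)) ∧
    (∀ f : C →ₗ[k] A, D.koppinenMul f D.koppinenOne = f) ∧
    (∀ f : C →ₗ[k] A, D.koppinenMul D.koppinenOne f = f) ∧
    (∀ f g₁ g₂ : C →ₗ[k] A,
        D.koppinenMul f (g₁ + g₂) = D.koppinenMul f g₁ + D.koppinenMul f g₂) ∧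
    (∀ f₁ f₂ g : C →ₗ[k] A,
        D.koppinenMul (f₁ + f₂) g = D.koppinenMul f₁ g + D.koppinenMul f₂ g) ∧
    (∀ (r : k) (f g : C →ₗ[k] A),
        D.koppinenMul (r • f) g = r • D.koppinenMul f g) ∧
    (∀ (r : k) (f g : C →ₗ[k] A),
        D.koppinenMul f (r • g) = r • D.koppinenMul f g) := by
  refine ⟨D.koppinenMul_assoc, D.koppinenMul_one, D.one_koppinenMul, fun f g₁ g₂ => ?_,
    fun f₁ f₂ g => ?_, fun r f g => ?_, fun r f g => ?_⟩
  · simp only [DoiHopfDatum.koppinenMul, LinearMap.add_comp, LinearMap.comp_add,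
      TensorProduct.map_add_right]
  · simp only [DoiHopfDatum.koppinenMul, LinearMap.add_comp, LinearMap.comp_add,
      TensorProduct.map_add_left]
  · simp only [DoiHopfDatum.koppinenMul, LinearMap.smul_comp, LinearMap.comp_smul,
      TensorProduct.map_smul_left]
  · simp only [DoiHopfDatum.koppinenMul, LinearMap.smul_comp, LinearMap.comp_smul,
      TensorProduct.map_smul_right]
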